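/- For every ν ∈ F_{C_n} and every formula α: if ν(α) ∈ D_n then ν(∼α) = F_n, and if ν(α) = F_n then ν(∼α) = T_n, where ∼α := ¬α ∧ α^{(n)} is the strong negation. Consequently ν(α ∧ ∼α) = F_n and ν(α ∨ ∼α) ∈ D_n for every formula α. -/

import Mathlib

/-- Formulas over the signature Σ (¬ unary; ∧, ∨, → binary). -/
inductive PFs : Type
  | var : ℕ → PFs
  | neg : PFs → PFs
  | and : PFs → PFs → PFs
  | or : PFs → PFs → PFs
  | imp : PFs → PFs → PFs

/-- `pw α k` is `α^k`: `α^0 = α` and `α^{j+1} = ¬(α^j ∧ ¬(α^j))`. -/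
def pw (α : PFs) : ℕ → PFs
  | 0 => α
  | k + 1 => PFs.neg ((pw α k).and (PFs.neg (pw α k)))

/-- Snapshots for `C_n`: `(n+1)`-tuples over `2` with at most one coordinate
equal to `0` (i.e. `false`). -/
def Snap (n : ℕ) : Type :=
  {z : Fin (n + 1) → Bool // ∀ i j : Fin (n + 1), z i = false → z j = false → i = j}

/-- `T_n = (1,0,1,…,1)`. -/
def Tval (n : ℕ) : Snap n :=
  ⟨fun i => decide ((i : ℕ) ≠ 1), by
    intro i j hi hj
    simp only [decide_eq_false_iff_not, not_not] at hi hj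
    exact Fin.ext (hi.trans hj.symm)⟩

/-- `F_n = (0,1,1,…,1)`. -/
def Fval (n : ℕ) : Snap n :=
  ⟨fun i => decide ((i : ℕ) ≠ 0), by
    intro i j hi hj
    simp only [decide_eq_false_iff_not, not_not] at hi hj
    exact Fin.ext (hi.trans hj.symm)⟩

/-- `t^n_i`: all coordinates `1` except (when it exists) the one in position
`i+3`, i.e. index `i+2`; for `i = n-1` all coordinates equal `1`. -/
def tval (n i : ℕ) : Snap n :=
  ⟨fun j => decide ((j : ℕ) ≠ i + 2), by
    intro j j' hj hj'
    simp only [decide_eq_false_iff_not, not_not] at hj hj'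
    exact Fin.ext (hj.trans hj'.symm)⟩

/-- Designated values `D_n = B_n \ {F_n} = {z : z₁ = 1}`. -/
def Dn (n : ℕ) : Set (Snap n) := {z | z.1 0 = true}

/-- Boolean values `Boo_n = {z : z₁ ∧ z₂ = 0}`. -/
def BooN (n : ℕ) : Set (Snap n) := {z | (z.1 0 && z.1 1) = false}

/-- Inconsistent values `I_n = B_n \ {T_n, F_n}`. -/
def InN (n : ℕ) : Set (Snap n) := {z | z ≠ Tval n ∧ z ≠ Fval n}

/-- `¬̃ z = {w : w₁ = z₂ and w₂ ≤ z₁}`. -/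
def negN {n : ℕ} (z : Snap n) : Set (Snap n) :=
  {w | w.1 0 = z.1 1 ∧ (w.1 1 = true → z.1 0 = true)}

open Classical in
/-- `z #̃ w`: Boolean (inside `Boo_n`) when both arguments are Boolean values,
non-deterministic (first coordinate determined classically) otherwise. -/
noncomputable def binN {n : ℕ} (f : Bool → Bool → Bool) (z w : Snap n) :
    Set (Snap n) :=
  if z ∈ BooN n ∧ w ∈ BooN n then
    {u | u ∈ BooN n ∧ u.1 0 = f (z.1 0) (w.1 0)}
  else
    {u | u.1 0 = f (z.1 0) (w.1 0)}

/-- `ν` is a multialgebra homomorphism into `A_{C_n}`. -/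
def IsHomN (n : ℕ) (ν : PFs → Snap n) : Prop :=
  (∀ α, ν (PFs.neg α) ∈ negN (ν α)) ∧
  (∀ α β, ν (PFs.and α β) ∈ binN (· && ·) (ν α) (ν β)) ∧
  (∀ α β, ν (PFs.or α β) ∈ binN (· || ·) (ν α) (ν β)) ∧
  (∀ α β, ν (PFs.imp α β) ∈ binN (fun a b => !a || b) (ν α) (ν β))

/-- `ν ∈ F_{C_n}`: a homomorphism satisfying the restrictions on valuations. -/
def FCn (n : ℕ) (ν : PFs → Snap n) : Prop :=
  IsHomN n ν ∧
  (∀ α, ν α = tval n 0 → ν (PFs.and α (PFs.neg α)) = Tval n) ∧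
  (∀ α k, 1 ≤ k → k ≤ n - 1 → ν α = tval n k →
    ν (PFs.and α (PFs.neg α)) ∈ InN n ∧ ν (pw α 1) = tval n (k - 1))

/-- `pc α j` is `α^{(j)}`: `α^{(1)} = α^1` and `α^{(j+1)} = α^{(j)} ∧ α^{j+1}`
(with the convention `α^{(0)} = α`). -/
def pc (α : PFs) : ℕ → PFs
  | 0 => α
  | 1 => pw α 1
  | j + 2 => (pc α (j + 1)).and (pw α (j + 2))

/-- The strong negation `∼α := ¬α ∧ α^{(n)}`. -/
def sneg (n : ℕ) (α : PFs) : PFs := (PFs.neg α).and (pc α n)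

/-!
A snapshot is determined by the position of its zero, so `B_n = {F_n, T_n, t_0, …, t_{n-1}}`.
If `ν α = t_k`, the restrictions on valuations lower the index by one at each step,
`ν (α^1) = t_{k-1}`, …, `ν (α^k) = t_0`, until `ν (α^{k+1}) = F_n`; as `k + 1 ≤ n`, this is the
value of a conjunct of `α^{(n)}` and makes `∼α` false. If `ν α = T_n`, already `¬α` is false.
If `ν α = F_n`, then `¬α` and every `α^j` with `j ≥ 1` take the value `T_n`, hence so does `∼α`.
-/

theorem pw_add (α : PFs) (j k : ℕ) : pw α (j + k) = pw (pw α j) k := by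
  induction k with
  | zero => rfl
  | succ k ih => rw [← Nat.add_assoc, pw, pw, ih]

section Snapshots

variable {n : ℕ} {z w : Snap n}

namespace Snap

theorem eq_of_apply_eq_false {i : Fin (n + 1)} (hz : z.1 i = false) (hw : w.1 i = false) :
    z = w := by
  have apply_eq_true {u : Snap n} (hu : u.1 i = false) {j : Fin (n + 1)} (hj : j ≠ i) :
      u.1 j = true :=
    Bool.eq_true_of_not_eq_false fun huj => hj (u.2 j i huj hu)
  refine Subtype.ext (funext fun j => ?_)
  rcases eq_or_ne j i with rfl | hj
  · rw [hz, hw]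
  · rw [apply_eq_true hz hj, apply_eq_true hw hj]

theorem eq_Fval_iff : z = Fval n ↔ z.1 0 = false := by
  have Fval_zero : (Fval n).1 0 = false := by simp [Fval]
  exact ⟨fun h => h ▸ Fval_zero, fun h => eq_of_apply_eq_false h Fval_zero⟩

theorem eq_Tval_iff [NeZero n] : z = Tval n ↔ z.1 1 = false := by
  have Tval_one : (Tval n).1 1 = false := by simp [Tval, NeZero.pos n]
  exact ⟨fun h => h ▸ Tval_one, fun h => eq_of_apply_eq_false h Tval_one⟩

theorem eq_Fval_or_eq_Tval_or_exists_eq_tval (z : Snap n) :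
    z = Fval n ∨ z = Tval n ∨ ∃ k ≤ n - 1, z = tval n k := by
  by_cases hz : ∃ i, z.1 i = false
  · obtain ⟨⟨i, hi⟩, hzi⟩ := hz
    match i with
    | 0 => exact .inl (eq_of_apply_eq_false hzi (by simp [Fval]))
    | 1 => exact .inr (.inl (eq_of_apply_eq_false hzi (by simp [Tval])))
    | k + 2 => exact .inr (.inr ⟨k, by omega, eq_of_apply_eq_false hzi (by simp [tval])⟩)
  · refine .inr (.inr ⟨n - 1, le_rfl, Subtype.ext (funext fun j => ?_)⟩)
    have hj : (j : ℕ) ≠ n - 1 + 2 := by omega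
    rw [Bool.eq_true_of_not_eq_false fun hzj => hz ⟨j, hzj⟩]
    exact (decide_eq_true hj).symm

end Snap

theorem Tval_ne_Fval (n : ℕ) : Tval n ≠ Fval n := by
  rw [Ne, Snap.eq_Fval_iff]
  simp [Tval]

theorem mem_Dn_iff_ne_Fval : z ∈ Dn n ↔ z ≠ Fval n := by
  simp [Dn, Snap.eq_Fval_iff]

theorem mem_BooN_iff_eq_Fval_or_eq_Tval [NeZero n] :
    z ∈ BooN n ↔ z = Fval n ∨ z = Tval n := by
  simp only [BooN, Set.mem_ofPred_eq, Bool.and_eq_false_iff, Snap.eq_Fval_iff, Snap.eq_Tval_iff]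

theorem Fval_mem_BooN [NeZero n] : Fval n ∈ BooN n :=
  mem_BooN_iff_eq_Fval_or_eq_Tval.2 (.inl rfl)

theorem Tval_mem_BooN [NeZero n] : Tval n ∈ BooN n :=
  mem_BooN_iff_eq_Fval_or_eq_Tval.2 (.inr rfl)

theorem apply_zero_of_mem_binN {f : Bool → Bool → Bool} {u : Snap n} (hu : u ∈ binN f z w) :
    u.1 0 = f (z.1 0) (w.1 0) := by
  rw [binN] at hu
  split_ifs at hu
  exacts [hu.2, hu]

theorem mem_BooN_of_mem_binN {f : Bool → Bool → Bool} {u : Snap n} (hu : u ∈ binN f z w)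
    (hz : z ∈ BooN n) (hw : w ∈ BooN n) : u ∈ BooN n := by
  rw [binN, if_pos ⟨hz, hw⟩] at hu
  exact hu.1

end Snapshots

section Valuations

variable {n : ℕ} {ν : PFs → Snap n} {α β : PFs}

namespace IsHomN

theorem and_eq_Fval_iff (hν : IsHomN n ν) :
    ν (α.and β) = Fval n ↔ ν α = Fval n ∨ ν β = Fval n := by
  simp only [Snap.eq_Fval_iff, apply_zero_of_mem_binN (hν.2.1 α β), Bool.and_eq_false_iff]

theorem or_eq_Fval_iff (hν : IsHomN n ν) :
    ν (α.or β) = Fval n ↔ ν α = Fval n ∧ ν β = Fval n := by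
  simp only [Snap.eq_Fval_iff, apply_zero_of_mem_binN (hν.2.2.1 α β), Bool.or_eq_false_iff]

theorem pc_succ_eq_Fval_iff (hν : IsHomN n ν) (m : ℕ) :
    ν (pc α (m + 1)) = Fval n ↔ ∃ j ≤ m, ν (pw α (j + 1)) = Fval n := by
  induction m with
  | zero => simp [pc]
  | succ m ih =>
    simp only [pc, hν.and_eq_Fval_iff, ih, Nat.le_succ_iff, or_and_right, exists_or,
      exists_eq_left]

variable [NeZero n]

theorem neg_eq_Fval_iff (hν : IsHomN n ν) : ν α.neg = Fval n ↔ ν α = Tval n := by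
  rw [Snap.eq_Fval_iff, Snap.eq_Tval_iff, (hν.1 α).1]

theorem neg_eq_Tval (hν : IsHomN n ν) (hα : ν α = Fval n) : ν α.neg = Tval n := by
  rw [Snap.eq_Fval_iff] at hα
  refine Snap.eq_Tval_iff.2 (Bool.eq_false_iff.2 fun h => ?_)
  exact Bool.false_ne_true (hα ▸ (hν.1 α).2 h)

theorem and_eq_Tval (hν : IsHomN n ν) (hα : ν α = Tval n) (hβ : ν β = Tval n) :
    ν (α.and β) = Tval n := by
  have hBoo : ν (α.and β) ∈ BooN n :=
    mem_BooN_of_mem_binN (hν.2.1 α β) (hα ▸ Tval_mem_BooN) (hβ ▸ Tval_mem_BooN)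
  have hne : ν (α.and β) ≠ Fval n := by
    simp [hν.and_eq_Fval_iff, hα, hβ, Tval_ne_Fval]
  exact (mem_BooN_iff_eq_Fval_or_eq_Tval.1 hBoo).resolve_left hne

theorem and_neg_self_eq_Fval_iff (hν : IsHomN n ν) :
    ν (α.and α.neg) = Fval n ↔ ν α ∈ BooN n := by
  rw [hν.and_eq_Fval_iff, hν.neg_eq_Fval_iff, mem_BooN_iff_eq_Fval_or_eq_Tval]

theorem pw_succ_eq_Tval (hν : IsHomN n ν) (hα : ν α ∈ BooN n) (k : ℕ) :
    ν (pw α (k + 1)) = Tval n := by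
  induction k with
  | zero => exact hν.neg_eq_Tval (hν.and_neg_self_eq_Fval_iff.2 hα)
  | succ k ih => exact hν.neg_eq_Tval (hν.and_neg_self_eq_Fval_iff.2 (ih ▸ Tval_mem_BooN))

theorem pc_succ_eq_Tval (hν : IsHomN n ν) (hα : ν α ∈ BooN n) (m : ℕ) :
    ν (pc α (m + 1)) = Tval n := by
  induction m with
  | zero => exact hν.pw_succ_eq_Tval hα 0
  | succ m ih => exact hν.and_eq_Tval ih (hν.pw_succ_eq_Tval hα (m + 1))

theorem sneg_eq_Tval (hν : IsHomN n ν) (hα : ν α = Fval n) : ν (sneg n α) = Tval n := by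
  obtain ⟨m, rfl⟩ := Nat.exists_eq_succ_of_ne_zero (NeZero.ne n)
  exact hν.and_eq_Tval (hν.neg_eq_Tval hα) (hν.pc_succ_eq_Tval (hα ▸ Fval_mem_BooN) m)

end IsHomN

namespace FCn

variable [NeZero n]

theorem pw_succ_eq_Fval (hν : FCn n ν) {k : ℕ} (hk : k ≤ n - 1) (hα : ν α = tval n k) :
    ν (pw α (k + 1)) = Fval n := by
  induction k generalizing α with
  | zero => exact hν.1.neg_eq_Fval_iff.2 (hν.2.1 α hα)
  | succ k ih =>
    have hα_one : ν (pw α 1) = tval n k := (hν.2.2 α (k + 1) (by omega) hk hα).2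
    rw [Nat.add_comm, pw_add]
    exact ih (by omega) hα_one

theorem sneg_eq_Fval (hν : FCn n ν) (hα : ν α ∈ Dn n) : ν (sneg n α) = Fval n := by
  obtain ⟨m, rfl⟩ := Nat.exists_eq_succ_of_ne_zero (NeZero.ne n)
  refine hν.1.and_eq_Fval_iff.2 ?_
  rcases (ν α).eq_Fval_or_eq_Tval_or_exists_eq_tval with hF | hT | ⟨k, hk, hk_eq⟩
  · exact absurd hF (mem_Dn_iff_ne_Fval.1 hα)
  · exact .inl (hν.1.neg_eq_Fval_iff.2 hT)
  · exact .inr ((hν.1.pc_succ_eq_Fval_iff m).2 ⟨k, hk, hν.pw_succ_eq_Fval hk hk_eq⟩)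

end FCn

end Valuations

/-- For `n = 1` this concerns the calculus `C_1`, whose snapshots are `F_1`, `T_1` and `t_0`. -/
theorem stmt_11_general (n : ℕ) [NeZero n] (ν : PFs → Snap n) (hν : FCn n ν) (α : PFs) :
    (ν α ∈ Dn n → ν (sneg n α) = Fval n) ∧
    (ν α = Fval n → ν (sneg n α) = Tval n) ∧
    (ν (α.and (sneg n α)) = Fval n) ∧
    (ν (α.or (sneg n α)) ∈ Dn n) := by
  refine ⟨hν.sneg_eq_Fval, hν.1.sneg_eq_Tval, ?_, ?_⟩
  · rw [hν.1.and_eq_Fval_iff, or_iff_not_imp_left]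
    exact fun hα => hν.sneg_eq_Fval (mem_Dn_iff_ne_Fval.2 hα)
  · rw [mem_Dn_iff_ne_Fval, Ne, hν.1.or_eq_Fval_iff]
    rintro ⟨hα, hsneg⟩
    exact Tval_ne_Fval n ((hν.1.sneg_eq_Tval hα).symm.trans hsneg)

/-- for every `ν ∈ F_{C_n}` and formula `α`: if `ν(α) ∈ D_n`
then `ν(∼α) = F_n`, and if `ν(α) = F_n` then `ν(∼α) = T_n`; consequently
`ν(α ∧ ∼α) = F_n` and `ν(α ∨ ∼α) ∈ D_n`. -/
theorem stmt_11 (n : ℕ) (hn : 2 ≤ n) (ν : PFs → Snap n) (hν : FCn n ν)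
    (α : PFs) :
    (ν α ∈ Dn n → ν (sneg n α) = Fval n) ∧
    (ν α = Fval n → ν (sneg n α) = Tval n) ∧
    (ν (α.and (sneg n α)) = Fval n) ∧
    (ν (α.or (sneg n α)) ∈ Dn n) := by
  have : NeZero n := ⟨by omega⟩
  exact stmt_11_general n ν hν α
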